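/- Let α > 0, α ≠ 1, let p be the exponential density with rate λ₁ > 0 and q the exponential density with rate λ₂ > 0, and suppose λ_h := λ₁ + (α−1)λ₂ > 0. Then h_α(p;q) = (1/(1−α)) ln(λ₁/λ_h) − ln λ₂. -/

import Mathlib

open MeasureTheory

/-!
Multiplying the second density by a constant `c > 0` shifts the cross-entropy by `-log c`, so the
normalization of `q` accounts for the term `-log l₂`. What remains under the integral is the
density `p` times `x ↦ exp (-(α - 1) * l₂ * x)`, that is, the Laplace transform of the exponential
density of rate `l₁` evaluated at `(α - 1) * l₂`.
-/

/-- The Rényi differential cross-entropy `h_α(p; q)` of two densities with respect to a measure `μ`.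
It is defined for arbitrary real functions and orders; if the integral diverges or vanishes, or if
`α = 1`, it takes the junk value `0`. -/
noncomputable def renyiCrossEntropy {Ω : Type*} [MeasurableSpace Ω] (μ : Measure Ω) (α : ℝ)
    (p q : Ω → ℝ) : ℝ :=
  (1 / (1 - α)) * Real.log (∫ x, p x * q x ^ (α - 1) ∂μ)

theorem renyiCrossEntropy_const_mul_right {Ω : Type*} [MeasurableSpace Ω] {μ : Measure Ω}
    {α c : ℝ} {p q : Ω → ℝ} (hα : α ≠ 1) (hc : 0 < c) (hq : 0 ≤ᵐ[μ] q)
    (hpq : ∫ x, p x * q x ^ (α - 1) ∂μ ≠ 0) :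
    renyiCrossEntropy μ α p (fun x ↦ c * q x) = renyiCrossEntropy μ α p q - Real.log c := by
  have integral_scale : ∫ x, p x * (c * q x) ^ (α - 1) ∂μ =
      c ^ (α - 1) * ∫ x, p x * q x ^ (α - 1) ∂μ := by
    rw [← integral_const_mul]
    refine integral_congr_ae ?_
    filter_upwards [hq] with x hx
    rw [Real.mul_rpow hc.le hx, mul_left_comm]
  have order_ne : 1 - α ≠ 0 := sub_ne_zero.mpr hα.symm
  rw [renyiCrossEntropy, renyiCrossEntropy, integral_scale,
    Real.log_mul (Real.rpow_pos_of_pos hc _).ne' hpq, Real.log_rpow hc]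
  field_simp
  ring

theorem integral_mul_exp_mul_exp_rpow_Ioi_zero {a b s : ℝ} (h : 0 < a + s * b) :
    ∫ x in Set.Ioi (0 : ℝ), (a * Real.exp (-a * x)) * Real.exp (-b * x) ^ s =
      a / (a + s * b) := by
  have integrand_eq (x : ℝ) : (a * Real.exp (-a * x)) * Real.exp (-b * x) ^ s =
      a * Real.exp (-(a + s * b) * x) := by
    rw [← Real.exp_mul, mul_assoc, ← Real.exp_add]
    ring_nf
  simp only [integrand_eq]
  rw [integral_const_mul, integral_exp_mul_Ioi (neg_lt_zero.mpr h), mul_zero, Real.exp_zero,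
    neg_div_neg_eq, mul_one_div]

theorem renyi_diff_cross_entropy_exponential_general {α l₁ l₂ : ℝ} (hα : α ≠ 1)
    (hl₁ : 0 < l₁) (hl₂ : 0 < l₂) (h : 0 < l₁ + (α - 1) * l₂) :
    renyiCrossEntropy (volume.restrict (Set.Ioi 0)) α
        (fun x ↦ l₁ * Real.exp (-l₁ * x)) (fun x ↦ l₂ * Real.exp (-l₂ * x)) =
      (1 / (1 - α)) * Real.log (l₁ / (l₁ + (α - 1) * l₂)) - Real.log l₂ := by
  have laplace := integral_mul_exp_mul_exp_rpow_Ioi_zero h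
  rw [renyiCrossEntropy_const_mul_right hα hl₂ (.of_forall fun x ↦ (Real.exp_pos _).le)
    (laplace.trans_ne (div_pos hl₁ h).ne'), renyiCrossEntropy, laplace]

/-- Rényi differential cross-entropy between two exponential densities: if `p` has rate
`λ₁ > 0`, `q` has rate `λ₂ > 0`, and `λ_h := λ₁ + (α-1)λ₂ > 0`, then
`h_α(p;q) = (1/(1-α)) ln(λ₁/λ_h) - ln λ₂`. -/
theorem renyi_diff_cross_entropy_exponential
    (α : ℝ) (hα : 0 < α) (hα1 : α ≠ 1)
    (l₁ l₂ : ℝ) (hl₁ : 0 < l₁) (hl₂ : 0 < l₂)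
    (lh : ℝ) (hlh_def : lh = l₁ + (α - 1) * l₂) (hlh : 0 < lh) :
    (1 / (1 - α)) * Real.log (∫ x in Set.Ioi (0 : ℝ),
        (l₁ * Real.exp (-l₁ * x)) * (l₂ * Real.exp (-l₂ * x)) ^ (α - 1)) =
      (1 / (1 - α)) * Real.log (l₁ / lh) - Real.log l₂ := by
  subst hlh_def
  exact renyi_diff_cross_entropy_exponential_general hα1 hl₁ hl₂ hlh
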